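/- Let φ ∈ Γ₀(H) satisfy φ*(H) ⊂ [0,+∞] and (φ*)⁻¹((0,+∞)) ≠ ∅, let s: G → [−∞,+∞] be such that −s ∈ Γ₀(G) and S = s⁻¹((0,+∞)) ≠ ∅, let γ ∈ (0,+∞), and let (x,y) ∈ Ω₁. Then the unique η ∈ [0,+∞) satisfying (−s)_▽( prox_{(γ·φ*(prox_{(η/γ)⊙φ*}(x/γ)))⊙(−s)_▽} y ) + η = 0 equals 0, and prox_{γ(φ▷s)}(x,y) = ( x − γ·proj_{cl dom φ*}(x/γ), proj_{cl S} y ). -/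

import Mathlib

open scoped Classical

noncomputable section

/-- Effective domain of an extended-real-valued function. -/
def edom {E : Type*} (f : E → EReal) : Set E := {x | f x < ⊤}

/-- Convexity of an extended-real-valued function, via its epigraph. -/
def ConvexEpi {E : Type*} [AddCommGroup E] [Module ℝ E] (f : E → EReal) : Prop :=
  Convex ℝ {p : E × ℝ | f p.1 ≤ (p.2 : EReal)}

/-- `f ∈ Γ₀(E)`: proper, lower semicontinuous, convex, with values in `(-∞, +∞]`. -/
def IsGamma0 {E : Type*} [AddCommGroup E] [Module ℝ E] [TopologicalSpace E]
    (f : E → EReal) : Prop :=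
  (∃ x, f x ≠ ⊤) ∧ (∀ x, f x ≠ ⊥) ∧ LowerSemicontinuous f ∧ ConvexEpi f

/-- Proximity operator: the (unique, for `f ∈ Γ₀`) minimizer of
`y ↦ f y + ‖x - y‖² / 2`. -/
def prox {E : Type*} [NormedAddCommGroup E] [InnerProductSpace ℝ E]
    (f : E → EReal) (x : E) : E :=
  Classical.epsilon fun p =>
    ∀ y, f p + ((‖x - p‖ ^ 2 / 2 : ℝ) : EReal) ≤ f y + ((‖x - y‖ ^ 2 / 2 : ℝ) : EReal)

/-- Metric projection onto a set. -/
def projC {E : Type*} [NormedAddCommGroup E] (C : Set E) (x : E) : E :=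
  Classical.epsilon fun p => p ∈ C ∧ ∀ y ∈ C, ‖x - p‖ ≤ ‖x - y‖

/-- Fenchel conjugate. -/
def fconj {E : Type*} [NormedAddCommGroup E] [InnerProductSpace ℝ E]
    (f : E → EReal) (y : E) : EReal :=
  ⨆ x, ((inner ℝ x y : ℝ) : EReal) - f x

/-- Plain scalar multiple `ξ·f`. -/
def smulE {E : Type*} (ξ : ℝ) (f : E → EReal) : E → EReal := fun x => (ξ : EReal) * f x

/-- The operation `ξ ⊙ f`: indicator of `cl (dom f)` if `ξ = 0`, and `ξ·f` if `ξ > 0`. -/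
def rscale {E : Type*} [TopologicalSpace E] (ξ : ℝ) (f : E → EReal) : E → EReal :=
  if ξ = 0 then fun x => if x ∈ closure (edom f) then (0 : EReal) else ⊤
  else fun x => (ξ : EReal) * f x

/-- `f^∨`: agrees with `f` where `-∞ < f < 0`, and is `+∞` elsewhere. -/
def pbas {E : Type*} (f : E → EReal) : E → EReal :=
  fun x => if ⊥ < f x ∧ f x < 0 then f x else ⊤

/-- `f^∧`: agrees with `f` where `0 < f < +∞`, and is `+∞` elsewhere. -/
def phaut {E : Type*} (f : E → EReal) : E → EReal :=
  fun x => if 0 < f x ∧ f x < ⊤ then f x else ⊤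

/-- `f_▽ = (f^∨)**`. -/
def basEnv {E : Type*} [NormedAddCommGroup E] [InnerProductSpace ℝ E]
    (f : E → EReal) : E → EReal :=
  fconj (fconj (pbas f))

/-- `f_▲ = (f^∧)**`. -/
def hautEnv {E : Type*} [NormedAddCommGroup E] [InnerProductSpace ℝ E]
    (f : E → EReal) : E → EReal :=
  fconj (fconj (phaut f))

/-- `S = s⁻¹((0, +∞))`. -/
def sdom {G : Type*} (s : G → EReal) : Set G := {v | 0 < s v ∧ s v < ⊤}

/-- The preperspective `φ ⋉ s`, on the Hilbert direct sum `H ⊕ G`. -/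
def prePersp {H G : Type*} [NormedAddCommGroup H] [InnerProductSpace ℝ H]
    [NormedAddCommGroup G] [InnerProductSpace ℝ G]
    (φ : H → EReal) (s : G → EReal) : WithLp 2 (H × G) → EReal := fun q =>
  if 0 < s ((WithLp.equiv 2 (H × G)) q).2 ∧ s ((WithLp.equiv 2 (H × G)) q).2 < ⊤ then
    s ((WithLp.equiv 2 (H × G)) q).2 *
      φ ((s ((WithLp.equiv 2 (H × G)) q).2).toReal⁻¹ • ((WithLp.equiv 2 (H × G)) q).1)
  else ⊤

/-- The perspective `φ ▷ s`: the largest lower semicontinuous convex minorant of the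
preperspective `φ ⋉ s`, on the Hilbert direct sum `H ⊕ G`. -/
def persp {H G : Type*} [NormedAddCommGroup H] [InnerProductSpace ℝ H]
    [NormedAddCommGroup G] [InnerProductSpace ℝ G]
    (φ : H → EReal) (s : G → EReal) : WithLp 2 (H × G) → EReal := fun q =>
  sSup {t : EReal | ∃ g : WithLp 2 (H × G) → EReal,
    LowerSemicontinuous g ∧ ConvexEpi g ∧ (∀ r, g r ≤ prePersp φ s r) ∧ t = g q}

/-- The point `(x, y)` in the Hilbert direct sum `H ⊕ G`. -/
def pairHG {H G : Type*} (x : H) (y : G) : WithLp 2 (H × G) :=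
  (WithLp.equiv 2 (H × G)).symm (x, y)

end
noncomputable section

/-- `Ω₁` of Proposition 4.2. -/
def Omega1 {H G : Type*} [NormedAddCommGroup H] [InnerProductSpace ℝ H]
    [NormedAddCommGroup G] [InnerProductSpace ℝ G]
    (φ : H → EReal) (s : G → EReal) (γ : ℝ) : Set (H × G) :=
  {p | fconj φ (projC (closure (edom (fconj φ))) (γ⁻¹ • p.1)) = 0 ∧
       s (projC (closure (sdom s)) p.2) = 0}

/-- `Ω₂` of Proposition 4.2. -/
def Omega2 {H G : Type*} [NormedAddCommGroup H] [InnerProductSpace ℝ H]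
    [NormedAddCommGroup G] [InnerProductSpace ℝ G]
    (φ : H → EReal) (s : G → EReal) (γ : ℝ) : Set (H × G) :=
  {p | (0 < fconj φ (projC (closure (edom (fconj φ))) (γ⁻¹ • p.1)) ∧
        fconj φ (projC (closure (edom (fconj φ))) (γ⁻¹ • p.1)) < ⊤) ∧
       s (prox (smulE (γ * (fconj φ (projC (closure (edom (fconj φ))) (γ⁻¹ • p.1))).toReal)
            (basEnv fun v => -(s v))) p.2) = 0}

/-- `Ω₃` of Proposition 4.2. -/
def Omega3 {H G : Type*} [NormedAddCommGroup H] [InnerProductSpace ℝ H]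
    [NormedAddCommGroup G] [InnerProductSpace ℝ G]
    (φ : H → EReal) (s : G → EReal) (γ : ℝ) : Set (H × G) :=
  {p | fconj φ (prox (smulE ((s (projC (closure (sdom s)) p.2)).toReal / γ) (fconj φ))
          (γ⁻¹ • p.1)) = 0 ∧
       0 < s (projC (closure (sdom s)) p.2) ∧ s (projC (closure (sdom s)) p.2) < ⊤}

/-- The equation (4.2) for `η` in Theorem 4.1(i). -/
def eta7eq {H G : Type*} [NormedAddCommGroup H] [InnerProductSpace ℝ H]
    [NormedAddCommGroup G] [InnerProductSpace ℝ G]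
    (φ : H → EReal) (s : G → EReal) (γ : ℝ) (x : H) (y : G) (η : ℝ) : Prop :=
  basEnv (fun v => -(s v))
      (prox (rscale (γ * (fconj φ (prox (rscale (η / γ) (fconj φ)) (γ⁻¹ • x))).toReal)
        (basEnv fun v => -(s v))) y) + (η : EReal) = 0

end

/-!
Let `p` and `q` be the projections of `x / γ` and `y` onto `cl dom φ*` and `cl S`. Since
`φ* ≥ 0 = φ* p` and `s q = 0`, all proximal points in the equation for `η` are `p` and `q`, whatever
`η` is, and the equation reads `η = 0`.

Put `z = x - γ p`, so that `z` is normal to `dom φ*` at `p` and `y - q` is normal to `S` at `q`. By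
the Fenchel–Moreau theorem `φ (a + t z) ≤ φ a + t ⟪z, p⟫` for `t ≥ 0`, hence the preperspective at
`(s v • a + z, v)` is at most `s v * φ a + ⟪z, p⟫`, and letting `v → q` in `S` gives
`(φ ▷ s) (z, q) ≤ ⟪z, p⟫`. Conversely `⟪·, (p, (y - q) / γ)⟫` minus a constant is an affine minorant
of the preperspective with value `⟪z, p⟫` at `(z, q)`. So `(p, (y - q) / γ)` is a subgradient of
`φ ▷ s` at `(z, q)`, and `(x, y) - (z, q) = γ (p, (y - q) / γ)` identifies the proximal point.
-/

open Filter Topology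
open scoped InnerProductSpace

section Convexity

lemma notMem_edom_iff {E : Type*} {f : E → EReal} {x : E} : x ∉ edom f ↔ f x = ⊤ :=
  not_lt_top_iff (α := EReal) (a := f x)

variable {E : Type*} [AddCommGroup E] [Module ℝ E] {f : E → EReal}

lemma ConvexEpi.convex_setOf_lt (hf : ConvexEpi f) (t : EReal) : Convex ℝ {x | f x < t} := by
  intro x hx y hy a b ha hb hab
  obtain ⟨μ, hxμ, hμt⟩ := EReal.lt_iff_exists_real_btwn.1 hx
  obtain ⟨ν, hyν, hνt⟩ := EReal.lt_iff_exists_real_btwn.1 hy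
  have hle : f (a • x + b • y) ≤ ((a * μ + b * ν : ℝ) : EReal) :=
    hf (x := (x, μ)) hxμ.le (y := (y, ν)) hyν.le ha hb hab
  have hconv : Convex ℝ {r : ℝ | (r : EReal) < t} :=
    (Set.ordConnected_Iio.preimage_mono EReal.coe_strictMono.monotone).convex
  exact hle.trans_lt (hconv hμt hνt ha hb hab)

lemma ConvexEpi.convex_edom (hf : ConvexEpi f) : Convex ℝ (edom f) :=
  hf.convex_setOf_lt ⊤

lemma IsGamma0.exists_eq_coe [TopologicalSpace E] (hf : IsGamma0 f) :
    ∃ (x : E) (r : ℝ), f x = r := by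
  obtain ⟨x, hx⟩ := hf.1
  exact ⟨x, (f x).toReal, (EReal.coe_toReal hx (hf.2.1 x)).symm⟩

variable [TopologicalSpace E] [IsTopologicalAddGroup E] [ContinuousSMul ℝ E]
  [LocallyConvexSpace ℝ E]

lemma ConvexEpi.exists_nonvertical_separation (hcv : ConvexEpi f)
    (hlsc : LowerSemicontinuous f) {a : E} (ha : a ∈ closure (edom f)) {r : ℝ}
    (hr : (r : EReal) < f a) :
    ∃ (l : StrongDual ℝ E) (β u : ℝ), 0 < β ∧ l a + r * β < u ∧
      ∀ (x : E) (t : ℝ), f x ≤ t → u < l x + t * β := by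
  have hclosed : IsClosed {p : E × ℝ | f p.1 ≤ (p.2 : EReal)} :=
    hlsc.isClosed_epigraph.preimage
      (continuous_fst.prodMk (continuous_coe_real_ereal.comp continuous_snd))
  obtain ⟨L, u, hau, hepi⟩ := geometric_hahn_banach_point_closed (x := (a, r)) hcv hclosed
    (not_le.2 hr)
  set l : StrongDual ℝ E := L.comp (.inl ℝ E ℝ)
  set β : ℝ := L (0, 1)
  have hL (x : E) (t : ℝ) : L (x, t) = l x + t * β := by
    have : (x, t) = (x, (0 : ℝ)) + t • ((0 : E), (1 : ℝ)) := by simp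
    rw [this, map_add, map_smul, smul_eq_mul]
    rfl
  have hlu (x : E) (t : ℝ) (hxt : f x ≤ t) : u < l x + t * β := hL x t ▸ hepi (x, t) hxt
  have har : l a + r * β < u := hL a r ▸ hau
  refine ⟨l, β, u, ?_, har, hlu⟩
  -- If `β ≤ 0`, the half-space `u ≤ L` contains `edom f × {r}`, hence also `(a, r)`.
  by_contra! hβ
  have hsub : closure (edom f) ⊆ {x | u ≤ l x + r * β} := by
    refine closure_minimal (fun x hx => ?_) (isClosed_le (by fun_prop) (by fun_prop))
    obtain ⟨t, hxt, -⟩ := EReal.lt_iff_exists_real_btwn.1 hx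
    have hut := hlu x (max t r) (hxt.le.trans (EReal.coe_le_coe_iff.2 (le_max_left t r)))
    have hmax := mul_le_mul_of_nonpos_right (le_max_right t r) hβ
    exact hut.le.trans (add_le_add_right hmax (l x))
  exact (hsub ha).not_gt har

lemma ConvexEpi.exists_affine_minorant_of_mem_closure_edom (hcv : ConvexEpi f)
    (hlsc : LowerSemicontinuous f) {a : E} (ha : a ∈ closure (edom f)) {r : ℝ}
    (hr : (r : EReal) < f a) :
    ∃ (l : StrongDual ℝ E) (c : ℝ), r < l a + c ∧ ∀ x, ((l x + c : ℝ) : EReal) ≤ f x := by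
  obtain ⟨l, β, u, hβ, hau, hlu⟩ := hcv.exists_nonvertical_separation hlsc ha hr
  have hnormalize (x : E) : (-β⁻¹ • l) x + β⁻¹ * u = β⁻¹ * (u - l x) := by
    rw [smul_apply, smul_eq_mul]
    ring
  refine ⟨-β⁻¹ • l, β⁻¹ * u, ?_, fun x => EReal.le_of_forall_lt_iff_le.1 fun t ht => ?_⟩
  · rw [hnormalize, lt_inv_mul_iff₀ hβ]
    linarith
  · have hut := hlu x t ht.le
    rw [hnormalize, EReal.coe_le_coe_iff, inv_mul_le_iff₀ hβ]
    linarith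

end Convexity

section Conjugation

variable {E : Type*} [NormedAddCommGroup E] [InnerProductSpace ℝ E] {f g : E → EReal}

lemma fconj_le_iff {w : E} {t : EReal} :
    fconj f w ≤ t ↔ ∀ x, (⟪x, w⟫_ℝ : EReal) - t ≤ f x := by
  refine iSup_le_iff.trans (forall_congr' fun x => ?_)
  induction t <;> induction f x <;> simp [← EReal.coe_sub, add_comm]

lemma fconj_le_coe_iff {w : E} {μ : ℝ} :
    fconj f w ≤ μ ↔ ∀ x, ((⟪x, w⟫_ℝ - μ : ℝ) : EReal) ≤ f x := by
  simp only [fconj_le_iff, EReal.coe_sub]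

lemma fconj_anti (hfg : f ≤ g) : fconj g ≤ fconj f :=
  fun _ => iSup_mono fun x => EReal.sub_le_sub le_rfl (hfg x)

lemma fconj_fconj_le (f : E → EReal) : fconj (fconj f) ≤ f := by
  refine fun x => fconj_le_iff.2 fun w => ?_
  rw [real_inner_comm]
  exact le_iSup (fun x => (⟪x, w⟫_ℝ : EReal) - f x) x

lemma le_fconj_fconj {w : E} {μ : ℝ} (h : fconj f w ≤ μ) (x : E) :
    ((⟪x, w⟫_ℝ - μ : ℝ) : EReal) ≤ fconj (fconj f) x := by
  rw [EReal.coe_sub, real_inner_comm]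
  exact (EReal.sub_le_sub le_rfl h).trans
    (le_iSup (fun w => (⟪w, x⟫_ℝ : EReal) - fconj f w) w)

lemma lowerSemicontinuous_fconj (f : E → EReal) : LowerSemicontinuous (fconj f) := by
  refine lowerSemicontinuous_iSup fun x => Continuous.lowerSemicontinuous ?_
  induction f x with
  | bot => simpa using continuous_const
  | top => simpa using continuous_const
  | coe t =>
    simp only [← EReal.coe_sub]
    exact continuous_coe_real_ereal.comp (by fun_prop)

lemma convexEpi_fconj (f : E → EReal) : ConvexEpi (fconj f) := by
  rintro ⟨v, μ⟩ hv ⟨w, ν⟩ hw a b ha hb hab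
  refine fconj_le_coe_iff.2 fun x => ?_
  have hconv : Convex ℝ {r : ℝ | (r : EReal) ≤ f x} :=
    (Set.ordConnected_Iic.preimage_mono EReal.coe_strictMono.monotone).convex
  have hsplit : ⟪x, a • v + b • w⟫_ℝ - (a • μ + b • ν) =
      a • (⟪x, v⟫_ℝ - μ) + b • (⟪x, w⟫_ℝ - ν) := by
    simp only [inner_add_right, real_inner_smul_right, smul_eq_mul]
    ring
  exact hsplit ▸ hconv (fconj_le_coe_iff.1 hv x) (fconj_le_coe_iff.1 hw x) ha hb hab

variable [CompleteSpace E]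

-- Off `closure (convexHull ℝ (edom f))`, an affine minorant of `f` can be tilted as steeply as
-- desired by a separating functional without leaving the minorants.
lemma edom_fconj_fconj_subset (hf : (edom (fconj f)).Nonempty) :
    edom (fconj (fconj f)) ⊆ closure (convexHull ℝ (edom f)) := by
  obtain ⟨w, hw⟩ := hf
  obtain ⟨μ, hμ, -⟩ := EReal.lt_iff_exists_real_btwn.1 hw
  intro a ha
  obtain ⟨ρ, hρ, -⟩ := EReal.lt_iff_exists_real_btwn.1 ha
  by_contra hna
  obtain ⟨l, u, hau, hlu⟩ := geometric_hahn_banach_point_closed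
    (convex_convexHull ℝ (edom f)).closure isClosed_closure hna
  obtain ⟨n, hn⟩ := exists_lt_nsmul (sub_pos.2 hau) (ρ - (⟪a, w⟫_ℝ - μ))
  rw [nsmul_eq_mul] at hn
  set w' := w - (n : ℝ) • (InnerProductSpace.toDual ℝ E).symm l
  have hw' (x : E) : ⟪x, w'⟫_ℝ = ⟪x, w⟫_ℝ - n * l x := by
    rw [inner_sub_right, real_inner_smul_right,
      real_inner_comm ((InnerProductSpace.toDual ℝ E).symm l),
      InnerProductSpace.toDual_symm_apply]
  have htilt : fconj f w' ≤ ((μ - n * u : ℝ) : EReal) := by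
    refine fconj_le_coe_iff.2 fun x => ?_
    by_cases hx : x ∈ edom f
    · refine (EReal.coe_le_coe_iff.2 ?_).trans (fconj_le_coe_iff.1 hμ.le x)
      have hux := (hlu x (subset_closure (subset_convexHull ℝ _ hx))).le
      have := mul_le_mul_of_nonneg_left hux (Nat.cast_nonneg (α := ℝ) n)
      rw [hw']
      linarith
    · exact le_top.trans_eq (notMem_edom_iff.1 hx).symm
  have hle := EReal.coe_le_coe_iff.1 ((le_fconj_fconj htilt a).trans hρ.le)
  rw [hw'] at hle
  linarith

lemma IsGamma0.exists_fconj_le_of_mem_closure_edom (hf : IsGamma0 f) {a : E}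
    (ha : a ∈ closure (edom f)) {r : ℝ} (hr : (r : EReal) < f a) :
    ∃ (w : E) (μ : ℝ), fconj f w ≤ μ ∧ r < ⟪a, w⟫_ℝ - μ := by
  obtain ⟨l, c, hrl, hl⟩ :=
    hf.2.2.2.exists_affine_minorant_of_mem_closure_edom hf.2.2.1 ha hr
  have hw (x : E) : ⟪x, (InnerProductSpace.toDual ℝ E).symm l⟫_ℝ = l x := by
    rw [real_inner_comm, InnerProductSpace.toDual_symm_apply]
  refine ⟨(InnerProductSpace.toDual ℝ E).symm l, -c, fconj_le_coe_iff.2 fun x => ?_, ?_⟩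
  · rw [hw, sub_neg_eq_add]
    exact hl x
  · rwa [hw, sub_neg_eq_add]

lemma IsGamma0.nonempty_edom_fconj (hf : IsGamma0 f) : (edom (fconj f)).Nonempty := by
  obtain ⟨a, r, har⟩ := hf.exists_eq_coe
  have ha : a ∈ edom f := har.trans_lt (EReal.coe_lt_top r)
  obtain ⟨w, μ, hμ, -⟩ := hf.exists_fconj_le_of_mem_closure_edom (subset_closure ha)
    (r := r - 1) (har ▸ EReal.coe_lt_coe_iff.2 (sub_one_lt r))
  exact ⟨w, hμ.trans_lt (EReal.coe_lt_top μ)⟩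

theorem IsGamma0.fconj_fconj (hf : IsGamma0 f) : fconj (fconj f) = f := by
  refine le_antisymm (fconj_fconj_le f) fun a => EReal.ge_of_forall_gt_iff_ge.1 fun r hr => ?_
  by_contra! hlt
  have ha : a ∈ closure (edom f) := by
    rw [← hf.2.2.2.convex_edom.convexHull_eq]
    exact edom_fconj_fconj_subset hf.nonempty_edom_fconj (hlt.trans (EReal.coe_lt_top r))
  obtain ⟨w, μ, hμ, hrμ⟩ := hf.exists_fconj_le_of_mem_closure_edom ha hr
  have := (le_fconj_fconj hμ a).trans_lt hlt
  exact hrμ.not_gt (EReal.coe_lt_coe_iff.1 this)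

lemma IsGamma0.le_add_mul_of_forall_inner_le (hf : IsGamma0 f) {z : E} {σ : ℝ}
    (hz : ∀ w ∈ edom (fconj f), ⟪z, w⟫_ℝ ≤ σ) {a : E} {α t : ℝ} (ha : f a ≤ α) (ht : 0 ≤ t) :
    f (a + t • z) ≤ ((α + t * σ : ℝ) : EReal) := by
  rw [← hf.fconj_fconj, fconj_le_coe_iff]
  intro w
  refine EReal.le_of_forall_lt_iff_le.1 fun μ hμ => EReal.coe_le_coe_iff.2 ?_
  have hwz := mul_le_mul_of_nonneg_left (hz w (hμ.trans (EReal.coe_lt_top μ))) ht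
  have hwa := EReal.coe_le_coe_iff.1 ((fconj_le_coe_iff.1 hμ.le a).trans ha)
  rw [real_inner_comm, inner_add_left, real_inner_smul_left]
  linarith

end Conjugation

section ProximityOperator

variable {E : Type*} [NormedAddCommGroup E] [InnerProductSpace ℝ E] {f : E → EReal}

/-- `v` is a subgradient of `f` at `p`, i.e. `v ∈ ∂f(p)`. This is vacuous where `f p = -∞`, and at
a point where `f p = +∞` it forces `f` to be identically `+∞`. -/
def IsSubgradient (f : E → EReal) (p v : E) : Prop :=
  ∀ y, f p + (⟪v, y - p⟫_ℝ : EReal) ≤ f y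

lemma IsSubgradient.smulE {p v : E} (h : IsSubgradient f p v) {γ : ℝ} (hγ : 0 ≤ γ) :
    IsSubgradient (smulE γ f) p (γ • v) := by
  intro y
  have hγ' : (0 : EReal) ≤ γ := EReal.coe_nonneg.2 hγ
  calc (γ : EReal) * f p + (⟪γ • v, y - p⟫_ℝ : EReal)
      = γ * (f p + (⟪v, y - p⟫_ℝ : EReal)) := by
        rw [real_inner_smul_left, EReal.coe_mul,
          EReal.left_distrib_of_nonneg_of_ne_top hγ' (EReal.coe_ne_top γ)]
    _ ≤ γ * f y := mul_le_mul_of_nonneg_left (h y) hγ'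

-- The subgradient inequality makes the proximal objective at `y` exceed its value at `p` by at
-- least `‖y - p‖ ^ 2 / 2`, which gives both minimality and uniqueness.
lemma prox_eq_of_isSubgradient {x p : E} {α : ℝ} (hα : f p = α)
    (h : IsSubgradient f p (x - p)) : prox f x = p := by
  have hstrong (y : E) : ((α + ‖x - p‖ ^ 2 / 2 + ‖y - p‖ ^ 2 / 2 : ℝ) : EReal) ≤
      f y + ((‖x - y‖ ^ 2 / 2 : ℝ) : EReal) := by
    have hexp : ‖x - y‖ ^ 2 = ‖x - p‖ ^ 2 - 2 * ⟪x - p, y - p⟫_ℝ + ‖y - p‖ ^ 2 := by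
      rw [← norm_sub_sq_real, sub_sub_sub_cancel_right]
    refine le_trans ?_ (add_le_add_left (h y) _)
    rw [hα, ← EReal.coe_add, ← EReal.coe_add, EReal.coe_le_coe_iff, hexp]
    linarith
  have hmin : ∀ y, f p + ((‖x - p‖ ^ 2 / 2 : ℝ) : EReal) ≤
      f y + ((‖x - y‖ ^ 2 / 2 : ℝ) : EReal) := by
    intro y
    refine le_trans ?_ (hstrong y)
    rw [hα, ← EReal.coe_add, EReal.coe_le_coe_iff]
    exact le_add_of_nonneg_right (by positivity)
  have hprox : ∀ y, f (prox f x) + ((‖x - prox f x‖ ^ 2 / 2 : ℝ) : EReal) ≤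
      f y + ((‖x - y‖ ^ 2 / 2 : ℝ) : EReal) :=
    Classical.epsilon_spec (p := fun p => ∀ y, f p + ((‖x - p‖ ^ 2 / 2 : ℝ) : EReal) ≤
      f y + ((‖x - y‖ ^ 2 / 2 : ℝ) : EReal)) ⟨p, hmin⟩
  have hle := (hstrong (prox f x)).trans (hprox p)
  rw [hα, ← EReal.coe_add, EReal.coe_le_coe_iff] at hle
  have hsq : ‖prox f x - p‖ ^ 2 = 0 := le_antisymm (by linarith) (sq_nonneg _)
  exact sub_eq_zero.1 (norm_eq_zero.1 (sq_eq_zero_iff.1 hsq))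

variable [CompleteSpace E] {C : Set E}

lemma projC_mem_and_inner_le_zero (hne : C.Nonempty) (hcl : IsClosed C) (hcv : Convex ℝ C)
    (x : E) : projC C x ∈ C ∧ ∀ w ∈ C, ⟪x - projC C x, w - projC C x⟫_ℝ ≤ 0 := by
  have hbdd : BddBelow (Set.range fun w : C => ‖x - w‖) :=
    ⟨0, Set.forall_mem_range.2 fun _ => norm_nonneg _⟩
  obtain ⟨p, hpC, hp⟩ := exists_norm_eq_iInf_of_complete_convex hne hcl.isComplete hcv x
  obtain ⟨hmem, hmin⟩ : projC C x ∈ C ∧ ∀ w ∈ C, ‖x - projC C x‖ ≤ ‖x - w‖ :=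
    Classical.epsilon_spec (p := fun p => p ∈ C ∧ ∀ w ∈ C, ‖x - p‖ ≤ ‖x - w‖)
      ⟨p, hpC, fun w hw => hp ▸ ciInf_le hbdd ⟨w, hw⟩⟩
  have : Nonempty C := hne.to_subtype
  refine ⟨hmem, (norm_eq_iInf_iff_real_inner_le_zero hcv hmem).1 ?_⟩
  exact le_antisymm (le_ciInf fun w => hmin w w.2) (ciInf_le hbdd ⟨_, hmem⟩)

lemma prox_eq_projC (hne : C.Nonempty) (hcl : IsClosed C) (hcv : Convex ℝ C)
    (hf : ∀ u, 0 ≤ f u) (htop : ∀ u ∉ C, f u = ⊤) {x : E} (hx : f (projC C x) = 0) :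
    prox f x = projC C x := by
  refine prox_eq_of_isSubgradient (α := 0) hx fun u => ?_
  rw [hx, zero_add]
  by_cases hu : u ∈ C
  · have hinner := (projC_mem_and_inner_le_zero hne hcl hcv x).2 u hu
    exact (EReal.coe_nonpos.2 hinner).trans (hf u)
  · exact le_top.trans_eq (htop u hu).symm

lemma prox_rscale_zero (hne : (edom f).Nonempty) (hcv : Convex ℝ (edom f)) (x : E) :
    prox (rscale 0 f) x = projC (closure (edom f)) x := by
  have hind : rscale 0 f = fun u => if u ∈ closure (edom f) then (0 : EReal) else ⊤ := if_pos rfl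
  rw [hind]
  refine prox_eq_projC hne.closure isClosed_closure hcv.closure (fun u => ?_)
    (fun u hu => if_neg hu)
    (if_pos (projC_mem_and_inner_le_zero hne.closure isClosed_closure hcv.closure x).1)
  split_ifs <;> simp

lemma prox_rscale (hne : (edom f).Nonempty) (hcv : Convex ℝ (edom f)) (hf : ∀ u, 0 ≤ f u)
    {x : E} (hx : f (projC (closure (edom f)) x) = 0) {ξ : ℝ} (hξ : 0 ≤ ξ) :
    prox (rscale ξ f) x = projC (closure (edom f)) x := by
  rcases hξ.eq_or_lt with rfl | hξ
  · exact prox_rscale_zero hne hcv x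
  have hmul : rscale ξ f = fun u => (ξ : EReal) * f u := if_neg hξ.ne'
  rw [hmul]
  refine prox_eq_projC hne.closure isClosed_closure hcv.closure
    (fun u => mul_nonneg (EReal.coe_nonneg.2 hξ.le) (hf u)) (fun u hu => ?_)
    (by rw [hx, mul_zero])
  rw [notMem_edom_iff.1 (mt (fun h => subset_closure h) hu), EReal.coe_mul_top_of_pos hξ]

end ProximityOperator

section BasicEnvelope

lemma mem_edom_pbas {E : Type*} {f : E → EReal} {x : E} :
    x ∈ edom (pbas f) ↔ ⊥ < f x ∧ f x < 0 := by
  refine ⟨fun hx => ?_, fun hx => (if_pos hx).trans_lt (hx.2.trans EReal.zero_lt_top)⟩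
  by_contra h
  exact notMem_edom_iff.2 (if_neg h) hx

lemma edom_pbas_neg {E : Type*} (s : E → EReal) : edom (pbas fun v => -(s v)) = sdom s := by
  ext v
  rw [mem_edom_pbas, bot_lt_iff_ne_bot, ne_eq, EReal.neg_eq_bot_iff, EReal.neg_lt_comm, neg_zero,
    and_comm, ← ne_eq, ← lt_top_iff_ne_top, sdom]
  rfl

lemma le_pbas {E : Type*} (f : E → EReal) : f ≤ pbas f := by
  intro x
  unfold pbas
  split_ifs
  exacts [le_rfl, le_top]

variable {E : Type*} [NormedAddCommGroup E] [InnerProductSpace ℝ E] {f : E → EReal}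

lemma IsGamma0.convex_edom_pbas (hf : IsGamma0 f) : Convex ℝ (edom (pbas f)) := by
  have hneg : edom (pbas f) = {x | f x < 0} :=
    Set.ext fun x => mem_edom_pbas.trans (and_iff_right (bot_lt_iff_ne_bot.2 (hf.2.1 x)))
  exact hneg ▸ hf.2.2.2.convex_setOf_lt 0

lemma basEnv_nonpos_of_mem_closure {x : E} (hx : x ∈ closure (edom (pbas f))) :
    basEnv f x ≤ 0 := by
  have hsub : edom (pbas f) ⊆ basEnv f ⁻¹' Set.Iic 0 := by
    intro v hv
    have hv' := mem_edom_pbas.1 hv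
    calc basEnv f v ≤ pbas f v := fconj_fconj_le (pbas f) v
      _ = f v := if_pos hv'
      _ ≤ 0 := hv'.2.le
  exact closure_minimal hsub ((lowerSemicontinuous_fconj _).isClosed_preimage 0) hx

variable [CompleteSpace E]

lemma IsGamma0.le_basEnv (hf : IsGamma0 f) : f ≤ basEnv f :=
  hf.fconj_fconj.ge.trans (fconj_anti (fconj_anti (le_pbas f)))

lemma IsGamma0.edom_basEnv (hf : IsGamma0 f) :
    edom (basEnv f) = closure (edom (pbas f)) := by
  refine subset_antisymm ?_ fun x hx =>
    (basEnv_nonpos_of_mem_closure hx).trans_lt EReal.zero_lt_top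
  rw [← hf.convex_edom_pbas.convexHull_eq]
  exact edom_fconj_fconj_subset
    (hf.nonempty_edom_fconj.mono fun w hw => (fconj_anti (le_pbas f) w).trans_lt hw)

lemma IsGamma0.prox_rscale_zero_basEnv (hf : IsGamma0 f) (hne : (edom (pbas f)).Nonempty)
    (x : E) : prox (rscale 0 (basEnv f)) x = projC (closure (edom (pbas f))) x := by
  have hcv : Convex ℝ (edom (basEnv f)) := (convexEpi_fconj _).convex_edom
  rw [prox_rscale_zero (hf.edom_basEnv ▸ hne.closure) hcv, hf.edom_basEnv, closure_closure]

end BasicEnvelope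

section Perspective

lemma exists_pos_eq_coe_of_mem_sdom {G : Type*} {s : G → EReal} {v : G} (hv : v ∈ sdom s) :
    ∃ t : ℝ, 0 < t ∧ s v = t := by
  have hcoe := EReal.coe_toReal hv.2.ne (EReal.bot_lt_zero.trans hv.1).ne'
  exact ⟨(s v).toReal, EReal.coe_pos.1 (hcoe ▸ hv.1), hcoe.symm⟩

lemma tendsto_toReal_nhdsWithin_sdom {G : Type*} [TopologicalSpace G] {s : G → EReal} {q : G}
    (hs : LowerSemicontinuousAt (fun v => -(s v)) q) (hq : s q = 0) :
    Tendsto (fun v => (s v).toReal) (𝓝[sdom s] q) (𝓝 0) := by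
  refine (EReal.tendsto_toReal EReal.zero_ne_top EReal.zero_ne_bot).comp (tendsto_order.2 ⟨?_, ?_⟩)
  · intro b hb
    filter_upwards [self_mem_nhdsWithin] with v hv using hb.trans hv.1
  · intro b hb
    have hlt : -b < -(s q) := by rwa [hq, EReal.neg_lt_neg_iff]
    filter_upwards [nhdsWithin_le_nhds (hs (-b) hlt)] with v hv using EReal.neg_lt_neg_iff.1 hv

variable {H G : Type*} [NormedAddCommGroup H] [InnerProductSpace ℝ H]
  [NormedAddCommGroup G] [InnerProductSpace ℝ G] {φ : H → EReal} {s : G → EReal}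

lemma inner_pairHG (r : WithLp 2 (H × G)) (p : H) (d : G) :
    ⟪r, pairHG p d⟫_ℝ = ⟪r.fst, p⟫_ℝ + ⟪r.snd, d⟫_ℝ :=
  rfl

lemma prePersp_of_eq_coe {r : WithLp 2 (H × G)} {t : ℝ} (ht : 0 < t) (hr : s r.snd = t) :
    prePersp φ s r = t * φ (t⁻¹ • r.fst) := by
  have hmem : 0 < s r.snd ∧ s r.snd < ⊤ :=
    ⟨hr ▸ EReal.coe_pos.2 ht, hr ▸ EReal.coe_lt_top t⟩
  refine (if_pos hmem).trans ?_
  change s r.snd * φ ((s r.snd).toReal⁻¹ • r.fst) = _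
  rw [hr, EReal.toReal_coe]

lemma prePersp_of_notMem_sdom {r : WithLp 2 (H × G)} (hr : r.snd ∉ sdom s) :
    prePersp φ s r = ⊤ :=
  if_neg hr

lemma persp_le_prePersp (φ : H → EReal) (s : G → EReal) : persp φ s ≤ prePersp φ s := by
  refine fun r => sSup_le ?_
  rintro _ ⟨g, -, -, hg, rfl⟩
  exact hg r

lemma lowerSemicontinuous_persp (φ : H → EReal) (s : G → EReal) :
    LowerSemicontinuous (persp φ s) := by
  rintro r t ht
  obtain ⟨_, ⟨g, hg, hgcv, hgle, rfl⟩, htg⟩ := lt_sSup_iff.1 ht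
  filter_upwards [hg r t htg] with r' hr'
  exact hr'.trans_le (le_sSup ⟨g, hg, hgcv, hgle, rfl⟩)

lemma fconj_fconj_prePersp_le_persp (φ : H → EReal) (s : G → EReal) :
    fconj (fconj (prePersp φ s)) ≤ persp φ s :=
  fun _ => le_sSup ⟨fconj (fconj (prePersp φ s)), lowerSemicontinuous_fconj _, convexEpi_fconj _,
    fconj_fconj_le _, rfl⟩

lemma fconj_prePersp_le {p : H} {d : G} {μ : ℝ} (hp : fconj φ p ≤ 0)
    (hd : ∀ v ∈ sdom s, ⟪v, d⟫_ℝ ≤ μ) : fconj (prePersp φ s) (pairHG p d) ≤ μ := by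
  refine fconj_le_coe_iff.2 fun r => ?_
  by_cases hr : r.snd ∈ sdom s
  · obtain ⟨t, ht, hrt⟩ := exists_pos_eq_coe_of_mem_sdom hr
    have hφ : (⟪t⁻¹ • r.fst, p⟫_ℝ : EReal) ≤ φ (t⁻¹ • r.fst) := by
      simpa using fconj_le_iff.1 hp (t⁻¹ • r.fst)
    calc ((⟪r, pairHG p d⟫_ℝ - μ : ℝ) : EReal)
        ≤ (⟪r.fst, p⟫_ℝ : EReal) := by
          rw [EReal.coe_le_coe_iff, inner_pairHG]
          linarith [hd _ hr]
      _ = t * (⟪t⁻¹ • r.fst, p⟫_ℝ : EReal) := by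
          rw [← EReal.coe_mul, real_inner_smul_left, mul_inv_cancel_left₀ ht.ne']
      _ ≤ t * φ (t⁻¹ • r.fst) := mul_le_mul_of_nonneg_left hφ (EReal.coe_nonneg.2 ht.le)
      _ = prePersp φ s r := (prePersp_of_eq_coe ht hrt).symm
  · exact le_top.trans_eq (prePersp_of_notMem_sdom hr).symm

variable [CompleteSpace H]

lemma IsGamma0.prePersp_le (hφ : IsGamma0 φ) {z : H} {σ : ℝ}
    (hz : ∀ w ∈ edom (fconj φ), ⟪z, w⟫_ℝ ≤ σ) {a : H} {α : ℝ} (ha : φ a ≤ α) {v : G}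
    (hv : v ∈ sdom s) :
    prePersp φ s (pairHG ((s v).toReal • a + z) v) ≤ (((s v).toReal * α + σ : ℝ) : EReal) := by
  obtain ⟨t, ht, hvt⟩ := exists_pos_eq_coe_of_mem_sdom hv
  rw [hvt, EReal.toReal_coe]
  calc prePersp φ s (pairHG (t • a + z) v)
      = t * φ (t⁻¹ • (t • a + z)) := prePersp_of_eq_coe ht hvt
    _ = t * φ (a + t⁻¹ • z) := by rw [smul_add, inv_smul_smul₀ ht.ne']
    _ ≤ t * ((α + t⁻¹ * σ : ℝ) : EReal) :=
        mul_le_mul_of_nonneg_left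
          (hφ.le_add_mul_of_forall_inner_le hz ha (inv_nonneg.2 ht.le)) (EReal.coe_nonneg.2 ht.le)
    _ = ((t * α + σ : ℝ) : EReal) := by
        rw [← EReal.coe_mul, mul_add, mul_inv_cancel_left₀ ht.ne']

lemma IsGamma0.persp_le (hφ : IsGamma0 φ) {z : H} {σ : ℝ}
    (hz : ∀ w ∈ edom (fconj φ), ⟪z, w⟫_ℝ ≤ σ) {q : G}
    (hs : LowerSemicontinuousAt (fun v => -(s v)) q) (hq : q ∈ closure (sdom s))
    (hsq : s q = 0) : persp φ s (pairHG z q) ≤ σ := by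
  obtain ⟨a, α, ha⟩ := hφ.exists_eq_coe
  have hlim := tendsto_toReal_nhdsWithin_sdom hs hsq
  have hpoint : Tendsto (fun v => pairHG ((s v).toReal • a + z) v) (𝓝[sdom s] q)
      (𝓝 (pairHG z q)) := by
    have hfst : Tendsto (fun v => (s v).toReal • a + z) (𝓝[sdom s] q) (𝓝 z) := by
      simpa using (hlim.smul_const a).add_const z
    exact ((WithLp.prod_continuous_toLp 2 H G).tendsto (z, q)).comp
      (hfst.prodMk_nhds (tendsto_id.mono_left nhdsWithin_le_nhds))
  have hbound : Tendsto (fun v => (((s v).toReal * α + σ : ℝ) : EReal)) (𝓝[sdom s] q)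
      (𝓝 (σ : EReal)) := by
    refine (continuous_coe_real_ereal.tendsto σ).comp ?_
    simpa using (hlim.mul_const α).add_const σ
  have : (𝓝[sdom s] q).NeBot := mem_closure_iff_nhdsWithin_neBot.1 hq
  refine (lowerSemicontinuous_persp φ s).isClosed_epigraph.mem_of_tendsto
    (hpoint.prodMk_nhds hbound) ?_
  filter_upwards [self_mem_nhdsWithin] with v hv
  exact (persp_le_prePersp φ s _).trans (hφ.prePersp_le hz ha.le hv)

variable {z p : H} {q d : G}

lemma IsGamma0.persp_eq_inner_and_isSubgradient (hφ : IsGamma0 φ) (hp : fconj φ p ≤ 0)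
    (hz : ∀ w ∈ edom (fconj φ), ⟪z, w - p⟫_ℝ ≤ 0)
    (hs : LowerSemicontinuousAt (fun v => -(s v)) q) (hq : q ∈ closure (sdom s))
    (hsq : s q = 0) (hd : ∀ v ∈ sdom s, ⟪d, v - q⟫_ℝ ≤ 0) :
    persp φ s (pairHG z q) = ⟪z, p⟫_ℝ ∧
      IsSubgradient (persp φ s) (pairHG z q) (pairHG p d) := by
  have hle : persp φ s (pairHG z q) ≤ ⟪z, p⟫_ℝ := by
    refine hφ.persp_le (fun w hw => ?_) hs hq hsq
    rw [← sub_nonpos, ← inner_sub_right]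
    exact hz w hw
  have hconj : fconj (prePersp φ s) (pairHG p d) ≤ (⟪q, d⟫_ℝ : ℝ) := by
    refine fconj_prePersp_le hp fun v hv => ?_
    rw [← sub_nonpos, ← inner_sub_left, real_inner_comm]
    exact hd v hv
  have hminorant (r : WithLp 2 (H × G)) :
      ((⟪r, pairHG p d⟫_ℝ - ⟪q, d⟫_ℝ : ℝ) : EReal) ≤ persp φ s r :=
    (le_fconj_fconj hconj r).trans (fconj_fconj_prePersp_le_persp φ s r)
  have hpair : ⟪pairHG z q, pairHG p d⟫_ℝ = ⟪z, p⟫_ℝ + ⟪q, d⟫_ℝ := rfl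
  have heq : persp φ s (pairHG z q) = ⟪z, p⟫_ℝ := by
    refine hle.antisymm (le_of_eq_of_le ?_ (hminorant (pairHG z q)))
    rw [hpair, add_sub_cancel_right]
  refine ⟨heq, fun r => le_of_eq_of_le ?_ (hminorant r)⟩
  rw [heq, ← EReal.coe_add, inner_sub_right, real_inner_comm r, real_inner_comm (pairHG z q), hpair]
  congr 1
  ring

end Perspective

section Omega

variable {H G : Type*} [NormedAddCommGroup H] [InnerProductSpace ℝ H] [CompleteSpace H]
  [NormedAddCommGroup G] [InnerProductSpace ℝ G] [CompleteSpace G]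
  {φ : H → EReal} {s : G → EReal} {γ : ℝ} {x : H} {y : G}

lemma eta7eq_iff_of_mem_Omega1 (hφ : IsGamma0 φ) (hφ' : ∀ u, 0 ≤ fconj φ u)
    (hs : IsGamma0 fun v => -(s v)) (hS : (sdom s).Nonempty) (hγ : 0 ≤ γ)
    (hmem : (x, y) ∈ Omega1 φ s γ) {η : ℝ} (hη : 0 ≤ η) :
    eta7eq φ s γ x y η ↔ η = 0 := by
  obtain ⟨hp, hq⟩ := hmem
  have hproxp : prox (rscale (η / γ) (fconj φ)) (γ⁻¹ • x) =
      projC (closure (edom (fconj φ))) (γ⁻¹ • x) :=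
    prox_rscale hφ.nonempty_edom_fconj (convexEpi_fconj φ).convex_edom hφ' hp (div_nonneg hη hγ)
  have hproxq : prox (rscale 0 (basEnv fun v => -(s v))) y = projC (closure (sdom s)) y := by
    rw [hs.prox_rscale_zero_basEnv (edom_pbas_neg s ▸ hS), edom_pbas_neg]
  have hbasEnv : basEnv (fun v => -(s v)) (projC (closure (sdom s)) y) = 0 := by
    refine le_antisymm (basEnv_nonpos_of_mem_closure ?_) ?_
    · rw [edom_pbas_neg]
      exact (projC_mem_and_inner_le_zero hS.closure isClosed_closure
        (edom_pbas_neg s ▸ hs.convex_edom_pbas.closure) y).1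
    · simpa [hq] using hs.le_basEnv (projC (closure (sdom s)) y)
  rw [eta7eq, hproxp, hp, EReal.toReal_zero, mul_zero, hproxq, hbasEnv, zero_add]
  exact EReal.coe_eq_zero

lemma prox_smulE_persp_of_mem_Omega1 (hφ : IsGamma0 φ) (hs : IsGamma0 fun v => -(s v))
    (hS : (sdom s).Nonempty) (hγ : 0 < γ) (hmem : (x, y) ∈ Omega1 φ s γ) :
    prox (smulE γ (persp φ s)) (pairHG x y) =
      pairHG (x - γ • projC (closure (edom (fconj φ))) (γ⁻¹ • x))
        (projC (closure (sdom s)) y) := by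
  obtain ⟨hp, hq⟩ := hmem
  obtain ⟨-, hpn⟩ := projC_mem_and_inner_le_zero hφ.nonempty_edom_fconj.closure isClosed_closure
    (convexEpi_fconj φ).convex_edom.closure (γ⁻¹ • x)
  obtain ⟨hqS, hqn⟩ := projC_mem_and_inner_le_zero hS.closure isClosed_closure
    (edom_pbas_neg s ▸ hs.convex_edom_pbas.closure) y
  set p := projC (closure (edom (fconj φ))) (γ⁻¹ • x)
  set q := projC (closure (sdom s)) y
  have hz : ∀ w ∈ edom (fconj φ), ⟪x - γ • p, w - p⟫_ℝ ≤ 0 := by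
    intro w hw
    have hscale : x - γ • p = γ • (γ⁻¹ • x - p) := by rw [smul_sub, smul_inv_smul₀ hγ.ne']
    rw [hscale, real_inner_smul_left]
    exact mul_nonpos_of_nonneg_of_nonpos hγ.le (hpn w (subset_closure hw))
  have hd : ∀ v ∈ sdom s, ⟪γ⁻¹ • (y - q), v - q⟫_ℝ ≤ 0 := by
    intro v hv
    rw [real_inner_smul_left]
    exact mul_nonpos_of_nonneg_of_nonpos (inv_nonneg.2 hγ.le) (hqn v (subset_closure hv))
  obtain ⟨hval, hsub⟩ :=
    hφ.persp_eq_inner_and_isSubgradient hp.le hz (hs.2.2.1 q) hqS hq hd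
  have hdiff : pairHG x y - pairHG (x - γ • p) q = γ • pairHG p (γ⁻¹ • (y - q)) := by
    calc pairHG x y - pairHG (x - γ • p) q
        = pairHG (x - (x - γ • p)) (y - q) := rfl
      _ = pairHG (γ • p) (γ • γ⁻¹ • (y - q)) := by rw [sub_sub_cancel, smul_inv_smul₀ hγ.ne']
      _ = γ • pairHG p (γ⁻¹ • (y - q)) := rfl
  refine prox_eq_of_isSubgradient (α := γ * ⟪x - γ • p, p⟫_ℝ) ?_ (hdiff ▸ hsub.smulE hγ.le)
  rw [smulE, hval, EReal.coe_mul]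

end Omega

theorem stmt11_general {H G : Type*}
    [NormedAddCommGroup H] [InnerProductSpace ℝ H] [CompleteSpace H]
    [NormedAddCommGroup G] [InnerProductSpace ℝ G] [CompleteSpace G]
    (φ : H → EReal) (s : G → EReal) (hφ : IsGamma0 φ)
    (hc1 : ∀ u : H, 0 ≤ fconj φ u)
    (hs : IsGamma0 (fun v : G => -(s v)))
    (hS : ∃ v : G, 0 < s v ∧ s v < ⊤)
    (γ : ℝ) (hγ : 0 < γ) (x : H) (y : G) (hmem : (x, y) ∈ Omega1 φ s γ) :
    eta7eq φ s γ x y 0 ∧ (∀ η : ℝ, 0 ≤ η → eta7eq φ s γ x y η → η = 0) ∧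
    prox (smulE γ (persp φ s)) (pairHG x y) =
      pairHG (x - γ • projC (closure (edom (fconj φ))) (γ⁻¹ • x))
        (projC (closure (sdom s)) y) := by
  have heta {η : ℝ} (hη : 0 ≤ η) : eta7eq φ s γ x y η ↔ η = 0 :=
    eta7eq_iff_of_mem_Omega1 hφ hc1 hs hS hγ.le hmem hη
  exact ⟨(heta le_rfl).2 rfl, fun η hη => (heta hη).1,
    prox_smulE_persp_of_mem_Omega1 hφ hs hS hγ hmem⟩

/-- Proposition 4.2(i). -/
theorem stmt11 {H G : Type*} [NormedAddCommGroup H] [InnerProductSpace ℝ H] [CompleteSpace H]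
    [NormedAddCommGroup G] [InnerProductSpace ℝ G] [CompleteSpace G]
    (φ : H → EReal) (s : G → EReal) (hφ : IsGamma0 φ)
    (hc1 : ∀ u : H, 0 ≤ fconj φ u)
    (hc2 : ∃ u : H, 0 < fconj φ u ∧ fconj φ u < ⊤)
    (hs : IsGamma0 (fun v : G => -(s v)))
    (hS : ∃ v : G, 0 < s v ∧ s v < ⊤)
    (γ : ℝ) (hγ : 0 < γ) (x : H) (y : G) (hmem : (x, y) ∈ Omega1 φ s γ) :
    eta7eq φ s γ x y 0 ∧ (∀ η : ℝ, 0 ≤ η → eta7eq φ s γ x y η → η = 0) ∧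
    prox (smulE γ (persp φ s)) (pairHG x y) =
      pairHG (x - γ • projC (closure (edom (fconj φ))) (γ⁻¹ • x))
        (projC (closure (sdom s)) y) := by
  exact stmt11_general φ s hφ hc1 hs hS γ hγ x y hmem
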